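/- arXiv:2307.16128 — 5 statements merged into one kernel-verified Lean document; each statement's English description precedes it below -/
import Mathlib

section
/- Let S ⊆ ℝⁿ be a convex set, let D be a map from S to real symmetric positive definite n×n matrices satisfying the self-concordance inequality on S, and let r : ℝⁿ → ℝⁿ be differentiable on S with Fréchet derivative D(z) at each z ∈ S. Let y ∈ S, set n(y) := −D(y)⁻¹ r(y), y⁺ := y + n(y), and δ := ‖n(y)‖_{D(y)}. If δ < 1 and the segment [y, y⁺] is contained in S, then ‖D(y)⁻¹ r(y⁺)‖_{D(y)} ≤ δ² / (1 − δ). -/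
open Matrix

/-- The Hessian norm `‖z‖_H = √(zᵀ H z)` associated with a matrix `H`. -/
noncomputable def hnorm {ι : Type*} [Fintype ι] (H : Matrix ι ι ℝ) (z : ι → ℝ) : ℝ :=
  Real.sqrt (z ⬝ᵥ H.mulVec z)

/-- A matrix-valued map `D` satisfies the self-concordance inequality on `S`. -/
def SelfConcordantOn {n : ℕ} (S : Set (Fin n → ℝ))
    (D : (Fin n → ℝ) → Matrix (Fin n) (Fin n) ℝ) : Prop :=
  ∀ y₁ ∈ S, ∀ y₂ ∈ S, hnorm (D y₁) (y₂ - y₁) < 1 →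
    ∀ v : Fin n → ℝ, hnorm (D y₂) v ≤ hnorm (D y₁) v / (1 - hnorm (D y₁) (y₂ - y₁))

/-!
Along the segment `y + t • d`, self-concordance makes the quadratic form of `D (y + t • d) - D y`
at most `(1 / (1 - t * δ) ^ 2 - 1)` times that of `D y`, where `δ = ‖d‖_{D y}`. As these matrices
are symmetric, polarization turns this into the same bound on the bilinear form. Integrating it over
`t ∈ [0, 1]` against a test vector `w` bounds the pairing of `w` with the linearization error of `r`
by `δ ^ 2 / (1 - δ) * ‖w‖_{D y}`, and duality converts this into a bound on `D y`-norms. For a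
Newton step `d` the linearization error is `r (y + d)` itself.
-/

theorem bilinForm_apply_sq_le_mul_of_abs_apply_self_le {K M : Type*} [Field K] [LinearOrder K]
    [IsStrictOrderedRing K] [AddCommGroup M] [Module K M] {B Q : LinearMap.BilinForm K M}
    (hB : B.IsSymm) (h : ∀ x, |B x x| ≤ Q x x) (x y : M) :
    B x y ^ 2 ≤ Q x x * Q y y := by
  have quadratic_nonneg (t : K) : 0 ≤ Q y y * (t * t) + -2 * B x y * t + Q x x := by
    have upper := (le_abs_self _).trans (h (x + t • y))
    have lower := (neg_le_abs _).trans (h (x - t • y))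
    simp only [map_add, map_sub, map_smul, LinearMap.add_apply, LinearMap.sub_apply,
      LinearMap.smul_apply, smul_eq_mul, hB.eq y x] at upper lower
    linarith
  have := discrim_le_zero quadratic_nonneg
  rw [discrim] at this
  linarith

section hnorm

variable {ι : Type*} [Fintype ι]

theorem hnorm_nonneg (H : Matrix ι ι ℝ) (v : ι → ℝ) : 0 ≤ hnorm H v :=
  Real.sqrt_nonneg _

theorem hnorm_sq {H : Matrix ι ι ℝ} (hH : H.PosSemidef) (v : ι → ℝ) :
    hnorm H v ^ 2 = v ⬝ᵥ H *ᵥ v :=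
  Real.sq_sqrt (by simpa using hH.dotProduct_mulVec_nonneg v)

theorem hnorm_smul (H : Matrix ι ι ℝ) (t : ℝ) (v : ι → ℝ) :
    hnorm H (t • v) = |t| * hnorm H v := by
  simp only [hnorm, mulVec_smul, dotProduct_smul, smul_dotProduct, smul_eq_mul, ← mul_assoc]
  rw [Real.sqrt_mul (mul_self_nonneg t), Real.sqrt_mul_self_eq_abs]

theorem hnorm_sub_comm (H : Matrix ι ι ℝ) (u v : ι → ℝ) : hnorm H (u - v) = hnorm H (v - u) := by
  simpa using hnorm_smul H (-1) (v - u)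

theorem abs_dotProduct_sub_mulVec_le_of_abs_hnorm_sq_sub_le {H E : Matrix ι ι ℝ}
    (hH : H.PosSemidef) (hE : E.PosSemidef) {c : ℝ} (hc : 0 ≤ c)
    (h : ∀ v, |hnorm E v ^ 2 - hnorm H v ^ 2| ≤ c * hnorm H v ^ 2) (w v : ι → ℝ) :
    |w ⬝ᵥ (E - H) *ᵥ v| ≤ c * (hnorm H w * hnorm H v) := by
  classical
  have hsymm : (Matrix.toBilin' (E - H)).IsSymm :=
    Matrix.isSymm_toBilin'_iff_isSymm.2 (by simpa using hE.isHermitian.sub hH.isHermitian)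
  have hpair := bilinForm_apply_sq_le_mul_of_abs_apply_self_le hsymm (Q := Matrix.toBilin' (c • H))
    (fun u => by
      simpa only [Matrix.toBilin'_apply', sub_mulVec, smul_mulVec, dotProduct_sub, dotProduct_smul,
        smul_eq_mul, hnorm_sq hH, hnorm_sq hE] using h u) w v
  have hbound : 0 ≤ c * (hnorm H w * hnorm H v) :=
    mul_nonneg hc (mul_nonneg (hnorm_nonneg H w) (hnorm_nonneg H v))
  refine abs_le_of_sq_le_sq ?_ hbound
  simp only [Matrix.toBilin'_apply', smul_mulVec, dotProduct_smul, smul_eq_mul,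
    ← hnorm_sq hH] at hpair
  linarith

theorem hnorm_inv_mulVec_le [DecidableEq ι] {H : Matrix ι ι ℝ} (hH : H.PosDef) {C : ℝ}
    (hC : 0 ≤ C) {u : ι → ℝ} (h : ∀ w, w ⬝ᵥ u ≤ C * hnorm H w) :
    hnorm H (H⁻¹ *ᵥ u) ≤ C := by
  have hsq : hnorm H (H⁻¹ *ᵥ u) ^ 2 ≤ C * hnorm H (H⁻¹ *ᵥ u) := by
    simpa [hnorm_sq hH.posSemidef, mul_nonsing_inv _ hH.det_pos.ne'.isUnit]
      using h (H⁻¹ *ᵥ u)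
  rcases (hnorm_nonneg H (H⁻¹ *ᵥ u)).eq_or_lt with hzero | hpos
  · exact hzero ▸ hC
  · exact le_of_mul_le_mul_right (by rwa [← sq]) hpos

end hnorm

theorem sub_le_of_hasDerivWithinAt_le_one_div_sq {f f' : ℝ → ℝ} {a δ : ℝ} (hδ : δ < 1)
    (hf : ∀ t ∈ Set.Icc (0 : ℝ) 1, HasDerivWithinAt f (f' t) (Set.Icc 0 1) t)
    (hf' : ∀ t ∈ Set.Icc (0 : ℝ) 1, f' t ≤ (1 / (1 - t * δ) ^ 2 - 1) * (a * δ)) :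
    f 1 - f 0 ≤ δ ^ 2 / (1 - δ) * a := by
  let G : ℝ → ℝ := fun t => ((1 - t * δ)⁻¹ - t * δ) * a
  have hG (t : ℝ) (ht : t ∈ Set.Icc (0 : ℝ) 1) :
      HasDerivAt G ((1 / (1 - t * δ) ^ 2 - 1) * (a * δ)) t := by
    have hne : 1 - t * δ ≠ 0 := by
      rcases le_or_gt 0 δ with hδ₀ | hδ₀ <;> nlinarith [ht.1, ht.2]
    have hlin : HasDerivAt (fun t : ℝ => t * δ) δ t := hasDerivAt_mul_const δ
    exact ((((hlin.const_sub 1).fun_inv hne).fun_sub hlin).mul_const a).congr_deriv (by ring)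
  have hanti : AntitoneOn (f - G) (Set.Icc 0 1) :=
    antitoneOn_of_hasDerivWithinAt_nonpos (convex_Icc 0 1)
      (fun t ht => ((hf t ht).sub (hG t ht).hasDerivWithinAt).continuousWithinAt)
      (fun t ht => ((hf t (interior_subset ht)).sub
        (hG t (interior_subset ht)).hasDerivWithinAt).mono interior_subset)
      (fun t ht => sub_nonpos.2 (hf' t (interior_subset ht)))
  have hle : f 1 - G 1 ≤ f 0 - G 0 :=
    hanti (Set.left_mem_Icc.2 zero_le_one) (Set.right_mem_Icc.2 zero_le_one) zero_le_one
  have hpos : 0 < 1 - δ := sub_pos.2 hδ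
  calc f 1 - f 0 ≤ G 1 - G 0 := by linarith
    _ = δ ^ 2 / (1 - δ) * a := by
      simp only [G]
      field_simp
      ring

namespace SelfConcordantOn

variable {n : ℕ} {S : Set (Fin n → ℝ)} {D : (Fin n → ℝ) → Matrix (Fin n) (Fin n) ℝ}
  {r : (Fin n → ℝ) → (Fin n → ℝ)} {y z d : Fin n → ℝ}

-- Apply self-concordance from `z` back to `y`, with `‖y - z‖_{D z}` bounded by
-- self-concordance from `y` to `z`; when that bound is not below `1`, the left side is nonpositive.
theorem two_sub_one_div_mul_hnorm_le (hSC : SelfConcordantOn S D) (hy : y ∈ S) (hz : z ∈ S)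
    (hlt : hnorm (D y) (z - y) < 1) (v : Fin n → ℝ) :
    (2 - 1 / (1 - hnorm (D y) (z - y))) * hnorm (D y) v ≤ hnorm (D z) v := by
  set s := hnorm (D y) (z - y)
  have hpos : 0 < 1 - s := sub_pos.2 hlt
  have hback : hnorm (D z) (y - z) ≤ 1 / (1 - s) - 1 := by
    calc hnorm (D z) (y - z) = hnorm (D z) (z - y) := hnorm_sub_comm _ _ _
      _ ≤ s / (1 - s) := hSC y hy z hz hlt (z - y)
      _ = 1 / (1 - s) - 1 := by field_simp; ring
  rcases le_or_gt 2 (1 / (1 - s)) with hlarge | hsmall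
  · exact (mul_nonpos_of_nonpos_of_nonneg (sub_nonpos.2 hlarge) (hnorm_nonneg _ _)).trans
      (hnorm_nonneg _ _)
  · have hback_lt : hnorm (D z) (y - z) < 1 := by linarith
    calc (2 - 1 / (1 - s)) * hnorm (D y) v
        ≤ (1 - hnorm (D z) (y - z)) * hnorm (D y) v :=
          mul_le_mul_of_nonneg_right (by linarith) (hnorm_nonneg _ _)
      _ ≤ hnorm (D z) v := by
          rw [mul_comm, ← le_div_iff₀ (sub_pos.2 hback_lt)]
          exact hSC z hz y hy hback_lt v

theorem abs_hnorm_sq_sub_le (hSC : SelfConcordantOn S D) (hy : y ∈ S) (hz : z ∈ S)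
    (hlt : hnorm (D y) (z - y) < 1) (v : Fin n → ℝ) :
    |hnorm (D z) v ^ 2 - hnorm (D y) v ^ 2| ≤
      (1 / (1 - hnorm (D y) (z - y)) ^ 2 - 1) * hnorm (D y) v ^ 2 := by
  have hupper := hSC y hy z hz hlt v
  have hlower := hSC.two_sub_one_div_mul_hnorm_le hy hz hlt v
  rw [div_eq_mul_one_div, mul_comm] at hupper
  rw [← _root_.one_div_pow]
  set u := 1 / (1 - hnorm (D y) (z - y))
  set a := hnorm (D y) v
  set b := hnorm (D z) v
  have ha : 0 ≤ a := hnorm_nonneg _ _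
  have hb : 0 ≤ b := hnorm_nonneg _ _
  have hupper_sq : b ^ 2 ≤ u ^ 2 * a ^ 2 := by
    rw [← mul_pow]
    exact pow_le_pow_left₀ hb hupper 2
  have hlower_sq : (2 - u ^ 2) * a ^ 2 ≤ b ^ 2 := by
    rcases le_or_gt 2 u with hlarge | hsmall
    · exact (mul_nonpos_of_nonpos_of_nonneg (by nlinarith) (sq_nonneg a)).trans (sq_nonneg b)
    · calc (2 - u ^ 2) * a ^ 2 ≤ (2 - u) ^ 2 * a ^ 2 := by
            gcongr
            nlinarith [sq_nonneg (u - 1)]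
        _ = ((2 - u) * a) ^ 2 := (mul_pow _ _ _).symm
        _ ≤ b ^ 2 := pow_le_pow_left₀ (mul_nonneg (sub_nonneg.2 hsmall.le) ha) hlower 2
  rw [abs_le]
  constructor <;> linarith

theorem abs_dotProduct_sub_mulVec_le (hSC : SelfConcordantOn S D) (hy : y ∈ S) (hz : z ∈ S)
    (hDy : (D y).PosSemidef) (hDz : (D z).PosSemidef) (hlt : hnorm (D y) (z - y) < 1)
    (w v : Fin n → ℝ) :
    |w ⬝ᵥ (D z - D y) *ᵥ v| ≤
      (1 / (1 - hnorm (D y) (z - y)) ^ 2 - 1) * (hnorm (D y) w * hnorm (D y) v) := by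
  refine abs_dotProduct_sub_mulVec_le_of_abs_hnorm_sq_sub_le hDy hDz ?_
    (hSC.abs_hnorm_sq_sub_le hy hz hlt) w v
  rw [sub_nonneg, ← _root_.one_div_pow]
  exact one_le_pow₀ (one_le_one_div (sub_pos.2 hlt) (sub_le_self 1 (hnorm_nonneg _ _)))

theorem dotProduct_linearization_error_le (hSC : SelfConcordantOn S D)
    (hD : ∀ z ∈ S, (D z).PosSemidef)
    (hr : ∀ z ∈ S, HasFDerivWithinAt r (D z).mulVecLin.toContinuousLinearMap S z)
    (hseg : segment ℝ y (y + d) ⊆ S) (hlt : hnorm (D y) d < 1) (w : Fin n → ℝ) :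
    w ⬝ᵥ (r (y + d) - r y - D y *ᵥ d) ≤
      hnorm (D y) d ^ 2 / (1 - hnorm (D y) d) * hnorm (D y) w := by
  have hy : y ∈ S := hseg (left_mem_segment ℝ _ _)
  have hmem (t : ℝ) (ht : t ∈ Set.Icc (0 : ℝ) 1) : y + t • d ∈ S :=
    hseg ((convex_segment y (y + d)).add_smul_mem (left_mem_segment ℝ _ _)
      (right_mem_segment ℝ _ _) ht)
  have hderiv (t : ℝ) (ht : t ∈ Set.Icc (0 : ℝ) 1) :
      HasDerivWithinAt (fun t : ℝ => w ⬝ᵥ (r (y + t • d) - t • D y *ᵥ d))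
        (w ⬝ᵥ (D (y + t • d) - D y) *ᵥ d) (Set.Icc 0 1) t := by
    have hline : HasDerivWithinAt (fun t : ℝ => y + t • d) d (Set.Icc 0 1) t := by
      simpa using (((hasDerivAt_id t).smul_const d).const_add y).hasDerivWithinAt
    have hrline : HasDerivWithinAt (fun t : ℝ => r (y + t • d)) (D (y + t • d) *ᵥ d)
        (Set.Icc 0 1) t :=
      ((hr _ (hmem t ht)).comp_hasDerivWithinAt t hline hmem :)
    have hlinear : HasDerivWithinAt (fun t : ℝ => t • D y *ᵥ d) (D y *ᵥ d) (Set.Icc 0 1) t := by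
      simpa using ((hasDerivAt_id t).smul_const (D y *ᵥ d)).hasDerivWithinAt
    rw [sub_mulVec]
    exact HasDerivWithinAt.fun_sum fun i _ =>
      (hasDerivWithinAt_pi.1 (hrline.fun_sub hlinear) i).const_mul (w i)
  have hbound (t : ℝ) (ht : t ∈ Set.Icc (0 : ℝ) 1) : w ⬝ᵥ (D (y + t • d) - D y) *ᵥ d ≤
      (1 / (1 - t * hnorm (D y) d) ^ 2 - 1) * (hnorm (D y) w * hnorm (D y) d) := by
    have hdist : hnorm (D y) (y + t • d - y) = t * hnorm (D y) d := by
      rw [add_sub_cancel_left, hnorm_smul, abs_of_nonneg ht.1]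
    have hdist_lt : hnorm (D y) (y + t • d - y) < 1 :=
      hdist.trans_lt ((mul_le_of_le_one_left (hnorm_nonneg _ _) ht.2).trans_lt hlt)
    rw [← hdist]
    exact (le_abs_self _).trans (hSC.abs_dotProduct_sub_mulVec_le hy (hmem t ht) (hD y hy)
      (hD _ (hmem t ht)) hdist_lt w d)
  have := sub_le_of_hasDerivWithinAt_le_one_div_sq hlt hderiv hbound
  simpa [← dotProduct_sub, sub_right_comm] using this

theorem hnorm_inv_mulVec_linearization_error_le (hSC : SelfConcordantOn S D)
    (hD : ∀ z ∈ S, (D z).PosSemidef) (hDy : (D y).PosDef)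
    (hr : ∀ z ∈ S, HasFDerivWithinAt r (D z).mulVecLin.toContinuousLinearMap S z)
    (hseg : segment ℝ y (y + d) ⊆ S) (hlt : hnorm (D y) d < 1) :
    hnorm (D y) ((D y)⁻¹ *ᵥ (r (y + d) - r y - D y *ᵥ d)) ≤
      hnorm (D y) d ^ 2 / (1 - hnorm (D y) d) :=
  hnorm_inv_mulVec_le hDy (div_nonneg (sq_nonneg _) (sub_nonneg.2 hlt.le))
    (hSC.dotProduct_linearization_error_le hD hr hseg hlt)

end SelfConcordantOn

theorem stmt_1_general {n : ℕ} {S : Set (Fin n → ℝ)}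
    {D : (Fin n → ℝ) → Matrix (Fin n) (Fin n) ℝ} (hSC : SelfConcordantOn S D)
    (hD : ∀ z ∈ S, (D z).PosSemidef) {r : (Fin n → ℝ) → (Fin n → ℝ)}
    (hr : ∀ z ∈ S, HasFDerivWithinAt r (D z).mulVecLin.toContinuousLinearMap S z)
    {y : Fin n → ℝ} (hDy : (D y).PosDef)
    (hδ : hnorm (D y) (-((D y)⁻¹ *ᵥ r y)) < 1)
    (hseg : segment ℝ y (y + -((D y)⁻¹ *ᵥ r y)) ⊆ S) :
    hnorm (D y) ((D y)⁻¹ *ᵥ r (y + -((D y)⁻¹ *ᵥ r y))) ≤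
      hnorm (D y) (-((D y)⁻¹ *ᵥ r y)) ^ 2 / (1 - hnorm (D y) (-((D y)⁻¹ *ᵥ r y))) := by
  have hnewton : D y *ᵥ (-((D y)⁻¹ *ᵥ r y)) = -r y := by
    simp [mulVec_neg, mul_nonsing_inv _ hDy.det_pos.ne'.isUnit]
  simpa only [hnewton, sub_neg_eq_add, sub_add_cancel] using
    hSC.hnorm_inv_mulVec_linearization_error_le hD hDy hr hseg hδ

theorem stmt_1 {n : ℕ} (S : Set (Fin n → ℝ)) (hS : Convex ℝ S)
    (D : (Fin n → ℝ) → Matrix (Fin n) (Fin n) ℝ)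
    (hPD : ∀ y ∈ S, (D y).PosDef)
    (hSC : SelfConcordantOn S D)
    (r : (Fin n → ℝ) → (Fin n → ℝ))
    (hr : ∀ z ∈ S,
      HasFDerivWithinAt r ((D z).mulVecLin.toContinuousLinearMap) S z)
    (y : Fin n → ℝ) (hy : y ∈ S)
    -- `n(y) := −D(y)⁻¹ r(y)`, `y⁺ := y + n(y)`, `δ := ‖n(y)‖_{D(y)}`
    (hδ : hnorm (D y) (-(D y)⁻¹.mulVec (r y)) < 1)
    (hseg : segment ℝ y (y + -(D y)⁻¹.mulVec (r y)) ⊆ S) :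
    hnorm (D y) ((D y)⁻¹.mulVec (r (y + -(D y)⁻¹.mulVec (r y)))) ≤
      (hnorm (D y) (-(D y)⁻¹.mulVec (r y))) ^ 2 /
        (1 - hnorm (D y) (-(D y)⁻¹.mulVec (r y))) :=
  stmt_1_general hSC (fun z hz => (hPD z hz).posSemidef) hr (hPD y hy) hδ hseg
end

section
/- (Robustness of the Newton decrement to a change of the equality-constraint right-hand side) Let M be a real symmetric positive definite n×n matrix with operator norm ‖M⁻¹‖ ≤ 1/m for some m > 0, and let r, Δr ∈ ℝⁿ satisfy rᵀ M⁻¹ r ≤ 1/81 and ‖Δr‖ ≤ √(3m/160) (Euclidean norm). Then (r + Δr)ᵀ M⁻¹ (r + Δr) ≤ 1/16; in particular, the Newton decrement ‖M⁻¹(r + Δr)‖_M is at most 1/4. -/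
open Matrix

/-- The Euclidean norm of a vector. -/
noncomputable def euclNorm {ι : Type*} [Fintype ι] (z : ι → ℝ) : ℝ :=
  Real.sqrt (z ⬝ᵥ z)

/-!
`M⁻¹` is positive semidefinite, so `‖·‖_{M⁻¹}` satisfies the triangle inequality. By Cauchy–Schwarz
the operator bound gives `‖Δr‖_{M⁻¹} ≤ ‖Δr‖ / √m`. Since `√(3/160) ≤ 5/36`, the perturbed decrement
is at most `1/9 + 5/36 = 1/4`.
-/

section

variable {ι : Type*} [Fintype ι] {H : Matrix ι ι ℝ}

lemma dotProduct_le_euclNorm_mul_euclNorm (u v : ι → ℝ) :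
    u ⬝ᵥ v ≤ euclNorm u * euclNorm v := by
  simpa only [euclNorm, dotProduct, pow_two] using
    Real.sum_mul_le_sqrt_mul_sqrt Finset.univ u v

lemma hnorm_le_iff {z : ι → ℝ} {c : ℝ} (hc : 0 ≤ c) :
    hnorm H z ≤ c ↔ z ⬝ᵥ H *ᵥ z ≤ c ^ 2 :=
  Real.sqrt_le_left hc

lemma hnorm_add_le (hH : H.PosSemidef) (u v : ι → ℝ) :
    hnorm H (u + v) ≤ hnorm H u + hnorm H v := by
  -- The instance is passed by name: `‖z‖` would elaborate to the sup norm on `ι → ℝ`.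
  let S := H.toSeminormedAddCommGroup hH
  have norm_eq (z : ι → ℝ) : S.norm z = hnorm H z :=
    congrArg Real.sqrt (dotProduct_comm (H *ᵥ z) z)
  simpa only [← norm_eq] using @norm_add_le _ S.toSeminormedAddGroup u v

lemma hnorm_le_sqrt_mul_euclNorm {c : ℝ} {z : ι → ℝ}
    (hz : euclNorm (H *ᵥ z) ≤ c * euclNorm z) :
    hnorm H z ≤ √c * euclNorm z := by
  have hz₀ : 0 ≤ euclNorm z := Real.sqrt_nonneg _
  calc
    hnorm H z ≤ √(euclNorm z * euclNorm (H *ᵥ z)) :=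
      Real.sqrt_le_sqrt (dotProduct_le_euclNorm_mul_euclNorm z (H *ᵥ z))
    _ ≤ √(euclNorm z * (c * euclNorm z)) := by gcongr
    _ = √(c * euclNorm z ^ 2) := by ring_nf
    _ = √c * euclNorm z := by rw [Real.sqrt_mul' c (sq_nonneg _), Real.sqrt_sq hz₀]

lemma hnorm_inv_mulVec [DecidableEq ι] (hH : IsUnit H.det) (z : ι → ℝ) :
    hnorm H (H⁻¹ *ᵥ z) = hnorm H⁻¹ z := by
  rw [hnorm, hnorm, mulVec_mulVec, mul_nonsing_inv H hH, one_mulVec, dotProduct_comm]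

theorem stmt_8_general [DecidableEq ι] {M : Matrix ι ι ℝ} (hM : M.PosDef)
    {m : ℝ} (hm : 0 < m) {a b : ℝ} (ha : 0 ≤ a) {r Δr : ι → ℝ}
    (hop : euclNorm (M⁻¹ *ᵥ Δr) ≤ 1 / m * euclNorm Δr)
    (hr : r ⬝ᵥ M⁻¹ *ᵥ r ≤ a ^ 2) (hΔr : euclNorm Δr ≤ b * √m) :
    (r + Δr) ⬝ᵥ M⁻¹ *ᵥ (r + Δr) ≤ (a + b) ^ 2 ∧
      hnorm M (M⁻¹ *ᵥ (r + Δr)) ≤ a + b := by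
  have hr' : hnorm M⁻¹ r ≤ a := (hnorm_le_iff ha).2 hr
  have hΔr' : hnorm M⁻¹ Δr ≤ b :=
    calc
      hnorm M⁻¹ Δr ≤ √(1 / m) * euclNorm Δr := hnorm_le_sqrt_mul_euclNorm hop
      _ ≤ √(1 / m) * (b * √m) := by gcongr
      _ = b := by
        rw [mul_left_comm, ← Real.sqrt_mul' _ hm.le, one_div_mul_cancel hm.ne', Real.sqrt_one,
          mul_one]
  have hb : 0 ≤ b := (Real.sqrt_nonneg _).trans hΔr'
  have hsum : hnorm M⁻¹ (r + Δr) ≤ a + b :=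
    (hnorm_add_le hM.inv.posSemidef r Δr).trans (add_le_add hr' hΔr')
  exact ⟨(hnorm_le_iff (add_nonneg ha hb)).1 hsum,
    (hnorm_inv_mulVec hM.det_pos.ne'.isUnit _).trans_le hsum⟩

end

lemma sqrt_three_mul_div_le_mul_sqrt {m : ℝ} (hm : 0 ≤ m) : √(3 * m / 160) ≤ 5 / 36 * √m := by
  rw [Real.sqrt_le_left (by positivity), mul_pow, Real.sq_sqrt hm]
  linarith

/-- Robustness of the Newton decrement to a change of the equality-constraint
right-hand side. -/
theorem stmt_8 {n : ℕ} (M : Matrix (Fin n) (Fin n) ℝ) (hM : M.PosDef)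
    (m : ℝ) (hm : 0 < m)
    -- operator-norm bound `‖M⁻¹‖ ≤ 1/m`
    (hop : ∀ v : Fin n → ℝ, euclNorm (M⁻¹.mulVec v) ≤ (1 / m) * euclNorm v)
    (r Δr : Fin n → ℝ)
    (hr : r ⬝ᵥ M⁻¹.mulVec r ≤ 1 / 81)
    (hΔr : euclNorm Δr ≤ Real.sqrt (3 * m / 160)) :
    (r + Δr) ⬝ᵥ M⁻¹.mulVec (r + Δr) ≤ 1 / 16 ∧
      hnorm M (M⁻¹.mulVec (r + Δr)) ≤ 1 / 4 := by
  have hb : euclNorm Δr ≤ 5 / 36 * √m := hΔr.trans (sqrt_three_mul_div_le_mul_sqrt hm.le)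
  have ha : r ⬝ᵥ M⁻¹ *ᵥ r ≤ (1 / 9) ^ 2 := hr.trans_eq (by norm_num)
  convert stmt_8_general hM hm (by norm_num) (hop Δr) ha hb using 2 <;> norm_num
end

section
/- (Bound on the barrier direction through the KKT matrix) Let H be a real symmetric positive definite N×N matrix, A a real P×N matrix of full row rank with P < N, and D := [[H, Aᵀ], [A, 0]] the associated (N+P)×(N+P) KKT matrix, which is invertible. Let g ∈ ℝᴺ satisfy gᵀ H⁻¹ g ≤ v for some v ≥ 0, let ν ∈ ℝᴾ, and set w := (g + Aᵀν, 0) ∈ ℝ^{N+P}. Then 0 ≤ wᵀ D⁻¹ w ≤ v. -/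
open Matrix

/-! Write `D⁻¹ w = (x, y)`. The two rows of the KKT system say that `x` lies in the kernel of `A`
and that `H x` and `g` differ by an element of the range of `Aᴴ`, which is orthogonal to that
kernel. Hence `w` pairs with `(x, y)` to `q = ⟨g, x⟩ = ⟨x, H x⟩ ≥ 0`, and the Fenchel–Young
inequality `2 Re ⟨g, x⟩ ≤ ⟨x, H x⟩ + ⟨g, H⁻¹ g⟩` reads `2 q ≤ q + ⟨g, H⁻¹ g⟩`. -/

section KKT

variable {m n R 𝕜 : Type*}

/-- The KKT matrix `[[H, Aᴴ], [A, 0]]` of the quadratic form `H` under the linear constraint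
`A x = 0`. The conjugate transpose is used so that complex scalars are covered; over `ℝ` it is the
transpose. -/
def kktMatrix [Zero R] [Star R] (H : Matrix n n R) (A : Matrix m n R) :
    Matrix (n ⊕ m) (n ⊕ m) R :=
  fromBlocks H Aᴴ A 0

variable [Fintype m] [Fintype n]

theorem kktMatrix_mulVec_sumElim_eq_iff [NonUnitalNonAssocSemiring R] [Star R]
    {H : Matrix n n R} {A : Matrix m n R} {x f : n → R} {y c : m → R} :
    kktMatrix H A *ᵥ Sum.elim x y = Sum.elim f c ↔ H *ᵥ x + Aᴴ *ᵥ y = f ∧ A *ᵥ x = c := by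
  simp [kktMatrix, fromBlocks_mulVec, Sum.elim_eq_iff]

theorem star_dotProduct_add_conjTranspose_mulVec [NonUnitalSemiring R] [StarRing R]
    {A : Matrix m n R} {x : n → R} (hx : A *ᵥ x = 0) (f : n → R) (y : m → R) :
    star x ⬝ᵥ (f + Aᴴ *ᵥ y) = star x ⬝ᵥ f := by
  rw [dotProduct_add, dotProduct_mulVec, ← star_mulVec, hx, star_zero, zero_dotProduct, add_zero]

variable [Field 𝕜]

theorem vecMul_injective_iff_rank_eq_card {A : Matrix m n 𝕜} :
    Function.Injective A.vecMul ↔ A.rank = Fintype.card m := by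
  rw [vecMul_injective_iff, linearIndependent_iff_card_eq_finrank_span, Set.finrank,
    ← rank_eq_finrank_span_row, eq_comm]

variable [StarRing 𝕜] [PartialOrder 𝕜] [DecidableEq n]

theorem isUnit_kktMatrix [DecidableEq m] {H : Matrix n n 𝕜} (hH : H.PosDef)
    {A : Matrix m n 𝕜} (hA : Function.Injective A.vecMul) : IsUnit (kktMatrix H A) := by
  have := hH.isUnit.invertible
  have schur_posDef : (A * H⁻¹ * Aᴴ).PosDef := hH.inv.mul_mul_conjTranspose_same hA
  rw [kktMatrix, isUnit_fromBlocks_iff_of_invertible₁₁, zero_sub, invOf_eq_nonsing_inv,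
    IsUnit.neg_iff]
  exact schur_posDef.isUnit

theorem star_dotProduct_add_star_dotProduct_le_of_posDef [IsOrderedAddMonoid 𝕜]
    {H : Matrix n n 𝕜} (hH : H.PosDef) (x g : n → 𝕜) :
    star x ⬝ᵥ g + star g ⬝ᵥ x ≤ star x ⬝ᵥ H *ᵥ x + star g ⬝ᵥ H⁻¹ *ᵥ g := by
  have mulVec_inv : H *ᵥ H⁻¹ *ᵥ g = g := by
    rw [mulVec_mulVec, mul_nonsing_inv _ ((isUnit_iff_isUnit_det _).1 hH.isUnit), one_mulVec]
  have star_inv_vecMul : star (H⁻¹ *ᵥ g) ᵥ* H = star g := by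
    rw [← hH.isHermitian.eq, ← star_mulVec, hH.isHermitian.eq, mulVec_inv]
  have square_nonneg := hH.posSemidef.dotProduct_mulVec_nonneg (x - H⁻¹ *ᵥ g)
  have square_eq : star (x - H⁻¹ *ᵥ g) ⬝ᵥ H *ᵥ (x - H⁻¹ *ᵥ g) =
      star x ⬝ᵥ H *ᵥ x + star g ⬝ᵥ H⁻¹ *ᵥ g - (star x ⬝ᵥ g + star g ⬝ᵥ x) := by
    rw [mulVec_sub, mulVec_inv, star_sub, sub_dotProduct, dotProduct_sub, dotProduct_sub,
      dotProduct_mulVec (star (H⁻¹ *ᵥ g)), star_inv_vecMul, star_mulVec,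
      hH.isHermitian.inv.eq, ← dotProduct_mulVec]
    ring
  rwa [square_eq, sub_nonneg] at square_nonneg

theorem stmt_9_general [StarOrderedRing 𝕜] [DecidableEq m] {H : Matrix n n 𝕜} (hH : H.PosDef)
    {A : Matrix m n 𝕜} (hA : A.rank = Fintype.card m) (g : n → 𝕜) (ν : m → 𝕜) :
    0 ≤ star (Sum.elim (g + Aᴴ *ᵥ ν) 0) ⬝ᵥ (kktMatrix H A)⁻¹ *ᵥ Sum.elim (g + Aᴴ *ᵥ ν) 0 ∧
      star (Sum.elim (g + Aᴴ *ᵥ ν) 0) ⬝ᵥ (kktMatrix H A)⁻¹ *ᵥ Sum.elim (g + Aᴴ *ᵥ ν) 0 ≤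
        star g ⬝ᵥ H⁻¹ *ᵥ g := by
  have hD : IsUnit (kktMatrix H A) := isUnit_kktMatrix hH (vecMul_injective_iff_rank_eq_card.2 hA)
  obtain ⟨x, y, hxy⟩ : ∃ x y, (kktMatrix H A)⁻¹ *ᵥ Sum.elim (g + Aᴴ *ᵥ ν) 0 = Sum.elim x y :=
    ⟨_, _, (Sum.elim_comp_inl_inr _).symm⟩
  obtain ⟨stationary, feasible⟩ : H *ᵥ x + Aᴴ *ᵥ y = g + Aᴴ *ᵥ ν ∧ A *ᵥ x = 0 := by
    rw [← kktMatrix_mulVec_sumElim_eq_iff, ← hxy, mulVec_mulVec,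
      mul_nonsing_inv _ ((isUnit_iff_isUnit_det _).1 hD), one_mulVec]
  have value_eq : star (Sum.elim (g + Aᴴ *ᵥ ν) 0) ⬝ᵥ Sum.elim x y = star g ⬝ᵥ x := by
    rw [Function.star_sumElim, sumElim_dotProduct_sumElim, star_zero, zero_dotProduct, add_zero,
      star_dotProduct, star_dotProduct_add_conjTranspose_mulVec feasible, ← star_dotProduct]
  have energy_eq : star x ⬝ᵥ H *ᵥ x = star x ⬝ᵥ g := by
    rw [← star_dotProduct_add_conjTranspose_mulVec feasible _ y, stationary,
      star_dotProduct_add_conjTranspose_mulVec feasible]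
  have energy_nonneg := hH.posSemidef.dotProduct_mulVec_nonneg x
  have energy_eq_star : star x ⬝ᵥ H *ᵥ x = star g ⬝ᵥ x := by
    rw [star_dotProduct g, ← energy_eq, (IsSelfAdjoint.of_nonneg energy_nonneg).star_eq]
  have fenchel_young := star_dotProduct_add_star_dotProduct_le_of_posDef hH x g
  rw [← energy_eq, ← energy_eq_star, add_le_add_iff_left] at fenchel_young
  rw [hxy, value_eq, ← energy_eq_star]
  exact ⟨energy_nonneg, fenchel_young⟩

end KKT

/-- Bound on the barrier direction through the KKT matrix. -/
theorem stmt_9 {N P : ℕ} (hPN : P < N)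
    (H : Matrix (Fin N) (Fin N) ℝ) (hH : H.PosDef)
    (A : Matrix (Fin P) (Fin N) ℝ) (hA : A.rank = P)
    (v : ℝ) (hv : 0 ≤ v)
    (g : Fin N → ℝ) (hg : g ⬝ᵥ H⁻¹.mulVec g ≤ v)
    (ν : Fin P → ℝ) :
    -- KKT matrix `D = [[H, Aᵀ], [A, 0]]` and `w = (g + Aᵀν, 0)`
    0 ≤ Sum.elim (g + Aᵀ.mulVec ν) (0 : Fin P → ℝ) ⬝ᵥ
          (Matrix.fromBlocks H Aᵀ A 0)⁻¹.mulVec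
            (Sum.elim (g + Aᵀ.mulVec ν) (0 : Fin P → ℝ)) ∧
      Sum.elim (g + Aᵀ.mulVec ν) (0 : Fin P → ℝ) ⬝ᵥ
          (Matrix.fromBlocks H Aᵀ A 0)⁻¹.mulVec
            (Sum.elim (g + Aᵀ.mulVec ν) (0 : Fin P → ℝ)) ≤ v := by
  have bounds := stmt_9_general hH (hA.trans (Fintype.card_fin P).symm) g ν
  simp only [kktMatrix, conjTranspose_eq_transpose_of_trivial, star_trivial] at bounds
  exact ⟨bounds.1, bounds.2.trans hg⟩
end

section
/- (Safe barrier-parameter increase) Let V be a real normed vector space, let v ≥ 1, and let β be a real number with 1 < β ≤ 1 + 1/(8√v). If n, h ∈ V satisfy ‖n‖ ≤ 1/9 and ‖h‖ ≤ √v, then ‖β n + (β − 1) h‖ ≤ 1/4. -/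
section

variable {𝕜 V : Type*} [SeminormedRing 𝕜] [SeminormedAddCommGroup V] [Module 𝕜 V]
  [IsBoundedSMul 𝕜 V]

theorem norm_smul_add_sub_one_smul_le (β : 𝕜) (n h : V) :
    ‖β • n + (β - 1) • h‖ ≤ ‖n‖ + ‖β - 1‖ * (‖n‖ + ‖h‖) :=
  calc
    ‖β • n + (β - 1) • h‖ = ‖n + (β - 1) • (n + h)‖ := by
      rw [smul_add, sub_smul β 1 n, one_smul, ← add_assoc, add_sub_cancel]
    _ ≤ ‖n‖ + ‖(β - 1) • (n + h)‖ := norm_add_le _ _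
    _ ≤ ‖n‖ + ‖β - 1‖ * ‖n + h‖ := by gcongr; exact norm_smul_le _ _
    _ ≤ ‖n‖ + ‖β - 1‖ * (‖n‖ + ‖h‖) := by gcongr; exact norm_add_le _ _

theorem stmt_11_general {v δ ε : ℝ} (hv : 1 ≤ v) {β : 𝕜} (hβ : ‖β - 1‖ ≤ δ / √v)
    {n h : V} (hn : ‖n‖ ≤ ε) (hh : ‖h‖ ≤ √v) :
    ‖β • n + (β - 1) • h‖ ≤ ε + δ * (1 + ε) := by
  have one_le_sqrt : 1 ≤ √v := Real.one_le_sqrt.mpr hv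
  have hε : 0 ≤ ε := (norm_nonneg n).trans hn
  have norm_add_norm_le : ‖n‖ + ‖h‖ ≤ √v * (1 + ε) :=
    calc
      ‖n‖ + ‖h‖ ≤ ε + √v := add_le_add hn hh
      _ ≤ √v * ε + √v := by gcongr; exact le_mul_of_one_le_left hε one_le_sqrt
      _ = √v * (1 + ε) := by ring
  calc
    ‖β • n + (β - 1) • h‖ ≤ ‖n‖ + ‖β - 1‖ * (‖n‖ + ‖h‖) :=
      norm_smul_add_sub_one_smul_le β n h
    _ ≤ ε + δ / √v * (√v * (1 + ε)) :=
      add_le_add hn <| mul_le_mul hβ norm_add_norm_le (by positivity) ((norm_nonneg _).trans hβ)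
    _ = ε + δ * (1 + ε) := by field_simp

end

/-- Safe barrier-parameter increase. -/
theorem stmt_11 (V : Type*) [NormedAddCommGroup V] [NormedSpace ℝ V]
    (v : ℝ) (hv : 1 ≤ v)
    (β : ℝ) (hβ₁ : 1 < β) (hβ₂ : β ≤ 1 + 1 / (8 * Real.sqrt v))
    (n h : V) (hn : ‖n‖ ≤ 1 / 9) (hh : ‖h‖ ≤ Real.sqrt v) :
    ‖β • n + (β - 1) • h‖ ≤ 1 / 4 := by
  have hβ : ‖β - 1‖ ≤ 1 / 8 / √v := by
    rw [Real.norm_of_nonneg (sub_nonneg.mpr hβ₁.le), div_div]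
    exact sub_le_iff_le_add'.mpr hβ₂
  exact (stmt_11_general hv hβ hn hh).trans_eq (by norm_num)
end

section
/- (Dynamic regret bound of OIPM-TEC) Let N ∈ ℕ, c ∈ ℝᴺ, v > 0, η₀ > 0, β > 1, and set η_t := η₀ βᵗ for t ≥ 1. Let (x_t)_{t=1}^{T}, (x^{η_t}_{t−1})_{t=1}^{T}, and (x*_t)_{t=0}^{T} be sequences in ℝᴺ such that for every t = 1, …, T: (i) cᵀ(x_t − x^{η_t}_{t−1}) ≤ (6/5)·(v/η_t) (tracking error of the Newton iterate to the barrier-path point), and (ii) cᵀ(x^{η_t}_{t−1} − x*_{t−1}) ≤ v/η_t (optimality gap of the barrier-path point). Then the dynamic regret satisfies Σ_{t=1}^{T} cᵀ(x_t − x*_t) ≤ ‖c‖ · Σ_{t=1}^{T} ‖x*_{t−1} − x*_t‖ + 11 v β / (5 η₀ (β − 1)), where ‖·‖ is the Euclidean norm. -/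
open Matrix

/-! The iterate `x t` is compared with the optimum `xs (t - 1)` of the previous round, whose
barrier path it follows. Replacing `xs (t - 1)` by `xs t` costs at most
`‖f‖ * ‖xs (t - 1) - xs t‖`, and these costs add up to the variation term. The errors against
`xs (t - 1)` are at most `(6 / 5 + 1) * v / η_t`, and `1 / η_t` is summable because `η_t` grows
geometrically. -/

theorem sum_Icc_one_inv_pow_le {K : Type*} [Field K] [LinearOrder K] [IsStrictOrderedRing K]
    {β : K} (hβ : 1 < β) (T : ℕ) :
    ∑ t ∈ Finset.Icc 1 T, (β ^ t)⁻¹ ≤ (β - 1)⁻¹ := by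
  have hβ_pos : 0 < β := one_pos.trans hβ
  calc ∑ t ∈ Finset.Icc 1 T, (β ^ t)⁻¹
      = ∑ t ∈ Finset.Ico 1 (T + 1), β⁻¹ ^ t := by
        simp only [inv_pow, Finset.Ico_add_one_right_eq_Icc]
    _ ≤ β⁻¹ ^ 1 / (1 - β⁻¹) :=
        geom_sum_Ico_le_of_lt_one (inv_nonneg.2 hβ_pos.le) (inv_lt_one_of_one_lt₀ hβ)
    _ = (β - 1)⁻¹ := by field_simp

section DynamicRegret

variable {E : Type*} [SeminormedAddCommGroup E]

/-- The cumulative variation `V_T` of the round-optimal points `xs 0, …, xs T`. -/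
def cumulativeVariation (xs : ℕ → E) (T : ℕ) : ℝ :=
  ∑ t ∈ Finset.Icc 1 T, ‖xs (t - 1) - xs t‖

variable [NormedSpace ℝ E]

/-- The dynamic regret `R_d(T)` of the decisions `x 1, …, x T` against the round-optimal points
`xs 1, …, xs T`, for the linear objective `f`. -/
def dynamicRegret (f : StrongDual ℝ E) (x xs : ℕ → E) (T : ℕ) : ℝ :=
  ∑ t ∈ Finset.Icc 1 T, f (x t - xs t)

theorem dynamicRegret_le_norm_mul_cumulativeVariation_add_sum (f : StrongDual ℝ E)
    {x xs : ℕ → E} {ε : ℕ → ℝ} {T : ℕ}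
    (hx : ∀ t ∈ Finset.Icc 1 T, f (x t - xs (t - 1)) ≤ ε t) :
    dynamicRegret f x xs T ≤
      ‖f‖ * cumulativeVariation xs T + ∑ t ∈ Finset.Icc 1 T, ε t := by
  rw [dynamicRegret, cumulativeVariation, Finset.mul_sum, ← Finset.sum_add_distrib]
  refine Finset.sum_le_sum fun t ht => ?_
  calc f (x t - xs t) = f (xs (t - 1) - xs t) + f (x t - xs (t - 1)) := by
        rw [← map_add, add_comm, sub_add_sub_cancel]
    _ ≤ ‖f‖ * ‖xs (t - 1) - xs t‖ + ε t :=
        add_le_add ((Real.le_norm_self _).trans (f.le_opNorm _)) (hx t ht)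

theorem stmt_16_general (T : ℕ) (f : StrongDual ℝ E) {v η₀ β : ℝ} (hv : 0 ≤ v) (hη₀ : 0 < η₀)
    (hβ : 1 < β) (x p xs : ℕ → E)
    (htrack : ∀ t ∈ Finset.Icc 1 T, f (x t - p t) ≤ (6 / 5) * (v / (η₀ * β ^ t)))
    (hgap : ∀ t ∈ Finset.Icc 1 T, f (p t - xs (t - 1)) ≤ v / (η₀ * β ^ t)) :
    dynamicRegret f x xs T ≤
      ‖f‖ * cumulativeVariation xs T + 11 * v / (5 * η₀ * (β - 1)) := by
  have hlag : ∀ t ∈ Finset.Icc 1 T,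
      f (x t - xs (t - 1)) ≤ 11 * v / (5 * η₀) * (β ^ t)⁻¹ := fun t ht =>
    calc f (x t - xs (t - 1)) = f (x t - p t) + f (p t - xs (t - 1)) := by
          rw [← map_add, sub_add_sub_cancel]
      _ ≤ (6 / 5) * (v / (η₀ * β ^ t)) + v / (η₀ * β ^ t) :=
          add_le_add (htrack t ht) (hgap t ht)
      _ = 11 * v / (5 * η₀) * (β ^ t)⁻¹ := by ring
  calc dynamicRegret f x xs T
      ≤ ‖f‖ * cumulativeVariation xs T +
          ∑ t ∈ Finset.Icc 1 T, 11 * v / (5 * η₀) * (β ^ t)⁻¹ :=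
        dynamicRegret_le_norm_mul_cumulativeVariation_add_sum f hlag
    _ ≤ ‖f‖ * cumulativeVariation xs T + 11 * v / (5 * η₀) * (β - 1)⁻¹ := by
        rw [← Finset.mul_sum]
        gcongr
        exact sum_Icc_one_inv_pow_le hβ T
    _ = ‖f‖ * cumulativeVariation xs T + 11 * v / (5 * η₀ * (β - 1)) := by
        rw [← div_eq_mul_inv, div_div]

end DynamicRegret

theorem euclNorm_eq_norm_toLp {ι : Type*} [Fintype ι] (z : ι → ℝ) :
    euclNorm z = ‖WithLp.toLp 2 z‖ := by
  simp only [euclNorm, dotProduct, EuclideanSpace.norm_eq, Real.norm_eq_abs, sq_abs, ← sq]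

theorem innerSL_toLp_apply_toLp {ι : Type*} [Fintype ι] (c z : ι → ℝ) :
    innerSL ℝ (WithLp.toLp 2 c) (WithLp.toLp 2 z) = c ⬝ᵥ z := by
  rw [innerSL_apply_apply, EuclideanSpace.inner_toLp_toLp, star_trivial, dotProduct_comm]

/-- Dynamic regret bound of OIPM-TEC. -/
theorem stmt_16 {N : ℕ} (T : ℕ)
    (c : Fin N → ℝ) (v η₀ β : ℝ) (hv : 0 < v) (hη₀ : 0 < η₀) (hβ : 1 < β)
    -- `x t` is the iterate, `p t` is the barrier-path point `x^{η_t}_{t-1}`,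
    -- `xs t` is the round-optimal point `x*_t`, and `η_t = η₀ βᵗ`
    (x p : ℕ → Fin N → ℝ) (xs : ℕ → Fin N → ℝ)
    (htrack : ∀ t ∈ Finset.Icc 1 T,
      c ⬝ᵥ (x t - p t) ≤ (6 / 5) * (v / (η₀ * β ^ t)))
    (hgap : ∀ t ∈ Finset.Icc 1 T,
      c ⬝ᵥ (p t - xs (t - 1)) ≤ v / (η₀ * β ^ t)) :
    (∑ t ∈ Finset.Icc 1 T, c ⬝ᵥ (x t - xs t)) ≤
      euclNorm c * (∑ t ∈ Finset.Icc 1 T, euclNorm (xs (t - 1) - xs t)) +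
        11 * v * β / (5 * η₀ * (β - 1)) := by
  have hconst : 11 * v / (5 * η₀ * (β - 1)) ≤ 11 * v * β / (5 * η₀ * (β - 1)) :=
    div_le_div_of_nonneg_right (le_mul_of_one_le_right (by positivity) hβ.le)
      (mul_pos (by positivity) (sub_pos.2 hβ)).le
  refine le_trans ?_ (add_le_add_right hconst _)
  simpa only [dynamicRegret, cumulativeVariation, innerSL_apply_norm, ← WithLp.toLp_sub,
    innerSL_toLp_apply_toLp, ← euclNorm_eq_norm_toLp] using
    stmt_16_general T (innerSL ℝ (WithLp.toLp 2 c)) hv.le hη₀ hβ (fun t => WithLp.toLp 2 (x t))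
      (fun t => WithLp.toLp 2 (p t)) (fun t => WithLp.toLp 2 (xs t))
      (by simpa only [← WithLp.toLp_sub, innerSL_toLp_apply_toLp])
      (by simpa only [← WithLp.toLp_sub, innerSL_toLp_apply_toLp])
end
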